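/- For every finite poset P, nk(P) = nk(Pᵒᵈ), where Pᵒᵈ denotes the same set with the reversed order. That is, reversing the order on a finite poset does not change its c-rank. -/

import Mathlib

/-- A list `ℓ 0, …, ℓ (k-1)` of elements of a poset is c-independent with witness
`m 0, …, m (k-1)`: `ℓ j ≰ m j` for all `j`, and `ℓ i ≤ m j` whenever `i < j`. -/
def CIndepList {P : Type*} [PartialOrder P] {k : ℕ} (ℓ m : Fin k → P) : Prop :=
  (∀ j, ¬ ℓ j ≤ m j) ∧ ∀ i j : Fin k, i < j → ℓ i ≤ m j

/-- The c-rank of a poset: the maximum cardinality of a c-independent subset,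
i.e. the largest `k` admitting an injective c-independent list of length `k`. -/
noncomputable def crank (P : Type*) [PartialOrder P] : ℕ :=
  sSup {k | ∃ ℓ m : Fin k → P, Function.Injective ℓ ∧ CIndepList ℓ m}

/-! A c-independent list never repeats an element, so only the lengths of such lists matter for
the c-rank. In the reversed order, the witness read backwards is a c-independent list, with the
original list read backwards as its witness, so the same lengths occur in `P` and in `Pᵒᵈ`. -/

section

open OrderDual

variable {P : Type*} [PartialOrder P] {k : ℕ}

theorem CIndepList.injective {ℓ m : Fin k → P} (h : CIndepList ℓ m) : Function.Injective ℓ :=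
  .of_lt_imp_ne fun i j hij heq => h.1 j (heq ▸ h.2 i j hij)

theorem CIndepList.orderDual {ℓ m : Fin k → P} (h : CIndepList ℓ m) :
    CIndepList (toDual ∘ m ∘ Fin.rev) (toDual ∘ ℓ ∘ Fin.rev) :=
  ⟨fun j => h.1 j.rev, fun i j hij => h.2 j.rev i.rev (Fin.rev_lt_rev.mpr hij)⟩

theorem exists_cIndepList_orderDual_iff :
    (∃ ℓ m : Fin k → Pᵒᵈ, CIndepList ℓ m) ↔ ∃ ℓ m : Fin k → P, CIndepList ℓ m where
  -- `Pᵒᵈᵒᵈ` is `P` up to definitional unfolding.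
  mp := fun ⟨_, _, h⟩ => ⟨_, _, h.orderDual⟩
  mpr := fun ⟨_, _, h⟩ => ⟨_, _, h.orderDual⟩

end

theorem crank_eq_sSup_cIndepList (P : Type*) [PartialOrder P] :
    crank P = sSup {k | ∃ ℓ m : Fin k → P, CIndepList ℓ m} := by
  have injective_and_iff {k : ℕ} (ℓ m : Fin k → P) :
      Function.Injective ℓ ∧ CIndepList ℓ m ↔ CIndepList ℓ m :=
    and_iff_right_of_imp CIndepList.injective
  simp only [crank, injective_and_iff]

-- When the lengths of c-independent lists are unbounded, both sides are the junk value `sSup = 0`.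
theorem crank_orderDual_general (P : Type*) [PartialOrder P] : crank P = crank Pᵒᵈ := by
  simp only [crank_eq_sSup_cIndepList, exists_cIndepList_orderDual_iff]

/-- Reversing the order on a finite poset does not change its c-rank. -/
theorem crank_orderDual (P : Type*) [PartialOrder P] [Fintype P] :
    crank P = crank Pᵒᵈ :=
  crank_orderDual_general P
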